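/- arXiv:1710.11234 — 5 statements merged into one kernel-verified Lean document; each statement's English description precedes it below -/
import Mathlib

section
/- Let n ≥ 1 and let u, v ∈ ℝ^{2n} be linearly independent vectors such that the 2-dimensional subspace Span_ℝ(u, v) of ℝ^{2n} is rational, i.e. admits a basis consisting of vectors with rational coordinates. Then the additive subgroup of ℝ² generated by the 2n column vectors (u_k, v_k) ∈ ℝ², k = 1, …, 2n, is a discrete subgroup of ℝ², free abelian of rank 2 (isomorphic to ℤ²). -/
theorem aux_denom {m : ℕ} (r : Fin m → ℚ) :
    ∃ N : ℕ, N ≠ 0 ∧ ∀ k, ∃ z : ℤ, (r k : ℝ) * N = z := by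
  refine ⟨∏ k, (r k).den, Finset.prod_ne_zero_iff.2 fun k _ => (r k).den_nz, fun k => ?_⟩
  obtain ⟨c, hc⟩ := Finset.dvd_prod_of_mem (fun k => (r k).den) (Finset.mem_univ k)
  refine ⟨(r k).num * c, ?_⟩
  rw [hc]
  have h : (r k) * (r k).den = (r k).num := Rat.mul_den_eq_num _
  have h' : (r k : ℝ) * ((r k).den : ℝ) = ((r k).num : ℝ) := by exact_mod_cast h
  push_cast
  rw [← mul_assoc, h']

/-- If `u, v ∈ ℝ^{2n}` are linearly independent and span a rational
2-dimensional subspace, then the additive subgroup of `ℝ²` generated by the `2n`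
columns `(u_k, v_k)` is discrete and free abelian of rank 2 (isomorphic to `ℤ²`). -/
theorem columns_discrete_of_rational_span (n : ℕ) (hn : 1 ≤ n)
    (u v : Fin (2 * n) → ℝ)
    (hind : LinearIndependent ℝ ![u, v])
    (hrat : ∃ p q : Fin (2 * n) → ℚ,
      Submodule.span ℝ ({u, v} : Set (Fin (2 * n) → ℝ)) =
        Submodule.span ℝ
          ({fun k => ((p k : ℝ)), fun k => ((q k : ℝ))} : Set (Fin (2 * n) → ℝ))) :
    DiscreteTopology
      ↥(AddSubgroup.closure (Set.range fun k : Fin (2 * n) => ((u k, v k) : ℝ × ℝ))) ∧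
    Nonempty
      (↥(AddSubgroup.closure (Set.range fun k : Fin (2 * n) => ((u k, v k) : ℝ × ℝ)))
        ≃+ ℤ × ℤ) := by
  obtain ⟨p, q, hs⟩ := hrat
  rw [LinearIndependent.pair_iff] at hind
  have hu : u ∈ Submodule.span ℝ ({u, v} : Set (Fin (2 * n) → ℝ)) :=
    Submodule.subset_span (by simp)
  have hv : v ∈ Submodule.span ℝ ({u, v} : Set (Fin (2 * n) → ℝ)) :=
    Submodule.subset_span (by simp)
  rw [hs, Submodule.mem_span_pair] at hu hv
  obtain ⟨a, b, hab⟩ := hu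
  obtain ⟨c, d, hcd⟩ := hv
  have huk : ∀ k, u k = a * p k + b * q k := fun k => by rw [← hab]; simp
  have hvk : ∀ k, v k = c * p k + d * q k := fun k => by rw [← hcd]; simp
  have hdet : a * d - b * c ≠ 0 := by
    intro h
    have h1 := hind d (-b) (by
      ext k; simp only [Pi.add_apply, Pi.smul_apply, smul_eq_mul, huk, hvk, Pi.zero_apply]
      linear_combination (p k : ℝ) * h)
    have h2 := hind c (-a) (by
      ext k; simp only [Pi.add_apply, Pi.smul_apply, smul_eq_mul, huk, hvk, Pi.zero_apply]
      linear_combination -(q k : ℝ) * h)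
    have ha : a = 0 := by linarith [h2.2]
    have hb : b = 0 := by linarith [h1.2]
    have h3 := hind 1 0 (by ext k; simp [huk, ha, hb])
    exact one_ne_zero h3.1
  obtain ⟨N, hN, hNp⟩ := aux_denom p
  obtain ⟨M, hM, hMq⟩ := aux_denom q
  have hN' : (N : ℝ) ≠ 0 := by exact_mod_cast hN
  have hM' : (M : ℝ) ≠ 0 := by exact_mod_cast hM
  have hli : LinearIndependent ℝ ![((a / N, c / N) : ℝ × ℝ), (b / M, d / M)] := by
    rw [LinearIndependent.pair_iff]
    intro s t hst
    simp only [Prod.smul_mk, smul_eq_mul, Prod.mk_add_mk, Prod.mk_eq_zero] at hst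
    obtain ⟨e1, e2⟩ := hst
    have f1 : (s / N) * (a * d - b * c) = 0 := by linear_combination d * e1 - b * e2
    have f2 : (t / M) * (a * d - b * c) = 0 := by linear_combination a * e2 - c * e1
    constructor
    · simpa [hdet, hN] using f1
    · simpa [hdet, hM] using f2
  let B := basisOfLinearIndependentOfCardEqFinrank hli (by simp)
  have hB : ⇑B = ![((a / N, c / N) : ℝ × ℝ), (b / M, d / M)] := by simp [B]
  set H := AddSubgroup.closure (Set.range fun k : Fin (2 * n) => ((u k, v k) : ℝ × ℝ)) with hH
  have hle : H ≤ (Submodule.span ℤ (Set.range B)).toAddSubgroup := by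
    rw [hH, AddSubgroup.closure_le]
    rintro _ ⟨k, rfl⟩
    obtain ⟨z, hz⟩ := hNp k
    obtain ⟨w, hw⟩ := hMq k
    have : ((u k, v k) : ℝ × ℝ) = z • B 0 + w • B 1 := by
      rw [hB]
      ext
      · simp [huk, ← hz, ← hw]; field_simp
      · simp [hvk, ← hz, ← hw]; field_simp
    show ((u k, v k) : ℝ × ℝ) ∈ Submodule.span ℤ (Set.range B)
    rw [this]
    exact Submodule.add_mem _ (Submodule.smul_mem _ _ (Submodule.subset_span ⟨0, rfl⟩))
      (Submodule.smul_mem _ _ (Submodule.subset_span ⟨1, rfl⟩))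
  have hD0 : DiscreteTopology (Submodule.span ℤ (Set.range B)) := inferInstance
  have hD : DiscreteTopology H :=
    DiscreteTopology.of_subset (s := (Submodule.span ℤ (Set.range B) : Set (ℝ × ℝ))) hD0 hle
  refine ⟨hD, ?_⟩
  let L : Submodule ℤ (ℝ × ℝ) := AddSubgroup.toIntSubmodule H
  haveI hDL : DiscreteTopology L := hD
  haveI : IsZLattice ℝ L := by
    constructor
    by_contra hne
    obtain ⟨f, hf0, hf⟩ := Submodule.exists_le_ker_of_lt_top _ (lt_top_iff_ne_top.2 hne)
    apply hf0
    have hfx : ∀ x y : ℝ, f (x, y) = x * f (1, 0) + y * f (0, 1) := by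
      intro x y
      have : ((x, y) : ℝ × ℝ) = x • (1, 0) + y • (0, 1) := by simp
      rw [this, map_add, map_smul, map_smul, smul_eq_mul, smul_eq_mul]
    have h := hind (f (1, 0)) (f (0, 1)) (by
      ext k
      have hk : f (u k, v k) = 0 :=
        hf (Submodule.subset_span (AddSubgroup.subset_closure ⟨k, rfl⟩))
      rw [hfx] at hk
      simp only [Pi.add_apply, Pi.smul_apply, smul_eq_mul, Pi.zero_apply]
      linarith)
    apply LinearMap.ext
    rintro ⟨x, y⟩
    rw [hfx, h.1, h.2]; simp
  haveI : Module.Free ℤ L := ZLattice.module_free ℝ L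
  haveI : Module.Finite ℤ L := ZLattice.module_finite ℝ L
  have hr : Module.finrank ℤ L = Module.finrank ℤ (ℤ × ℤ) := by
    rw [ZLattice.rank ℝ L]; simp
  exact ⟨(LinearEquiv.ofFinrankEq L (ℤ × ℤ) hr).toAddEquiv⟩
end

section
/- Let n ≥ 1 and let u ∈ ℝ^{2n} be a nonzero vector. Then there exists γ ∈ Sp(2n, ℤ) such that every coordinate of γu is nonzero. -/
def idx1 (n : ℕ) (j : Fin n) : Fin (2 * n) :=
  ⟨2 * j.val, by have := j.isLt; omega⟩

def idx2 (n : ℕ) (j : Fin n) : Fin (2 * n) :=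
  ⟨2 * j.val + 1, by have := j.isLt; omega⟩

def omegaJ {R : Type*} [CommRing R] (n : ℕ) (j : Fin n) (u v : Fin (2 * n) → R) : R :=
  u (idx1 n j) * v (idx2 n j) - u (idx2 n j) * v (idx1 n j)

def omegaForm {R : Type*} [CommRing R] (n : ℕ) (u v : Fin (2 * n) → R) : R :=
  ∑ j : Fin n, omegaJ n j u v

def IsSymplectic {R : Type*} [CommRing R] (n : ℕ)
    (g : Matrix (Fin (2 * n)) (Fin (2 * n)) R) : Prop :=
  ∀ x y : Fin (2 * n) → R, omegaForm n (g.mulVec x) (g.mulVec y) = omegaForm n x y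

/-- `omegaForm` as a linear map in the second variable. -/
def omegaLin (n : ℕ) (v : Fin (2 * n) → ℝ) : (Fin (2 * n) → ℝ) →ₗ[ℝ] ℝ where
  toFun x := omegaForm n v x
  map_add' x y := by
    simp only [omegaForm, omegaJ, Pi.add_apply, ← Finset.sum_add_distrib]
    exact Finset.sum_congr rfl fun _ _ => by ring
  map_smul' c x := by
    simp only [omegaForm, omegaJ, Pi.smul_apply, smul_eq_mul, Finset.mul_sum, RingHom.id_apply]
    exact Finset.sum_congr rfl fun _ _ => by ring

theorem omega_swap (n : ℕ) (v x : Fin (2 * n) → ℝ) : omegaForm n v x = - omegaForm n x v := by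
  simp only [omegaForm, omegaJ, ← Finset.sum_neg_distrib]
  exact Finset.sum_congr rfl fun _ _ => by ring

theorem omega_add_right (n : ℕ) (v x y : Fin (2 * n) → ℝ) :
    omegaForm n v (x + y) = omegaForm n v x + omegaForm n v y := (omegaLin n v).map_add x y

theorem omega_smul_right (n : ℕ) (c : ℝ) (v x : Fin (2 * n) → ℝ) :
    omegaForm n v (c • x) = c * omegaForm n v x := (omegaLin n v).map_smul c x

theorem omega_add_left (n : ℕ) (v x y : Fin (2 * n) → ℝ) :
    omegaForm n (x + y) v = omegaForm n x v + omegaForm n y v := by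
  rw [omega_swap, omega_add_right, omega_swap n v x, omega_swap n v y]; ring

theorem omega_smul_left (n : ℕ) (c : ℝ) (v x : Fin (2 * n) → ℝ) :
    omegaForm n (c • x) v = c * omegaForm n x v := by
  rw [omega_swap, omega_smul_right, omega_swap n v x]; ring

theorem omega_cast (n : ℕ) (v x : Fin (2 * n) → ℤ) :
    ((omegaForm n v x : ℤ) : ℝ) = omegaForm n (fun i => (v i : ℝ)) (fun i => (x i : ℝ)) := by
  simp [omegaForm, omegaJ]

/-- The integer symplectic transvection `x ↦ x + m ω(v, x) v`. -/
def transv (n : ℕ) (m : ℤ) (v : Fin (2 * n) → ℤ) : Matrix (Fin (2 * n)) (Fin (2 * n)) ℤ :=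
  1 + Matrix.of fun i k => m * v i * omegaForm n v (Pi.single k 1)

theorem transv_mulVec (n : ℕ) (m : ℤ) (v : Fin (2 * n) → ℤ) (x : Fin (2 * n) → ℝ) :
    ((transv n m v).map (Int.cast : ℤ → ℝ)).mulVec x =
      x + ((m : ℝ) * omegaForm n (fun i => (v i : ℝ)) x) • (fun i => (v i : ℝ)) := by
  have h1 : (transv n m v).map (Int.cast : ℤ → ℝ) = 1 + Matrix.of fun i k =>
      (m : ℝ) * v i * omegaForm n (fun i => (v i : ℝ)) (Pi.single k 1) := by
    ext i k
    have hs : (fun i => (((Pi.single k 1 : Fin (2 * n) → ℤ) i : ℤ) : ℝ)) = Pi.single k 1 := by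
      ext j; by_cases h : j = k
      · subst h; simp
      · simp [h]
    have := omega_cast n v (Pi.single k 1)
    rw [hs] at this
    simp only [transv, Matrix.map_apply, Matrix.add_apply, Matrix.of_apply, Int.cast_add,
      Int.cast_mul, this]
    congr 1
    by_cases h : i = k
    · subst h; simp
    · simp [Matrix.one_apply, h]
  have h2 := LinearMap.pi_apply_eq_sum_univ (omegaLin n fun i => (v i : ℝ)) x
  rw [h1, Matrix.add_mulVec, Matrix.one_mulVec]
  congr 1
  ext i
  have h3 : omegaForm n (fun i => (v i : ℝ)) x =
      ∑ k, x k * omegaForm n (fun i => (v i : ℝ)) (Pi.single k 1) := by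
    refine h2.trans (Finset.sum_congr rfl fun k _ => ?_)
    rw [smul_eq_mul]
    congr 1
    change omegaForm n _ _ = _
    congr 1
    ext j; simp [Pi.single_apply, eq_comm]
  simp only [Matrix.mulVec, dotProduct, Matrix.of_apply, Pi.smul_apply, smul_eq_mul]
  rw [h3, Finset.mul_sum, Finset.sum_mul]
  exact Finset.sum_congr rfl fun _ _ => by ring

theorem transv_symplectic (n : ℕ) (m : ℤ) (v : Fin (2 * n) → ℤ) :
    IsSymplectic n ((transv n m v).map (Int.cast : ℤ → ℝ)) := by
  intro x y
  rw [transv_mulVec, transv_mulVec]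
  simp only [omega_add_left, omega_add_right, omega_smul_left, omega_smul_right]
  set w : Fin (2 * n) → ℝ := fun i => (v i : ℝ)
  have h0 : omegaForm n w w = 0 := by have := omega_swap n w w; linarith
  rw [h0, omega_swap n x w]; ring

theorem omega_single_idx1 (n : ℕ) (j : Fin n) (u : Fin (2 * n) → ℝ) :
    omegaForm n (Pi.single (idx1 n j) 1) u = u (idx2 n j) := by
  unfold omegaForm
  rw [Finset.sum_eq_single j]
  · have : idx2 n j ≠ idx1 n j := by simp [idx1, idx2]
    simp [omegaJ, this]
  · intro b _ hb
    have h1 : idx1 n b ≠ idx1 n j := by simp [idx1]; omega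
    have h2 : idx2 n b ≠ idx1 n j := by simp [idx1, idx2]; omega
    simp [omegaJ, h1, h2]
  · simp

theorem omega_single_idx2 (n : ℕ) (j : Fin n) (u : Fin (2 * n) → ℝ) :
    omegaForm n (Pi.single (idx2 n j) 1) u = - u (idx1 n j) := by
  unfold omegaForm
  rw [Finset.sum_eq_single j]
  · have : idx1 n j ≠ idx2 n j := by simp [idx1, idx2]
    simp [omegaJ, this]
  · intro b _ hb
    have h1 : idx2 n b ≠ idx2 n j := by simp [idx2]; omega
    have h2 : idx1 n b ≠ idx2 n j := by simp [idx1, idx2]; omega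
    simp [omegaJ, h1, h2]
  · simp

/-- There is an integer vector with no zero coordinate which is not `ω`-orthogonal to `u`. -/
theorem exists_vec (n : ℕ) (u : Fin (2 * n) → ℝ) (hu : u ≠ 0) :
    ∃ v : Fin (2 * n) → ℤ, (∀ i, v i ≠ 0) ∧ omegaForm n (fun i => (v i : ℝ)) u ≠ 0 := by
  by_contra! hc
  apply hu
  have h1 := hc (fun _ => 1) (by simp)
  have hs : ∀ k, omegaForm n (Pi.single k 1) u = 0 := by
    intro k
    have h2 := hc (fun i => 1 + if i = k then 1 else 0) (by intro i; split_ifs <;> simp)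
    have h3 : (fun i => (((1 + if i = k then 1 else 0 : ℤ)) : ℝ)) =
        (fun _ => ((1 : ℤ) : ℝ)) + Pi.single k 1 := by
      ext i; simp [Pi.single_apply]
    rw [h3, omega_add_left, h1, zero_add] at h2
    exact h2
  ext i
  obtain ⟨i, hi⟩ := i
  rcases Nat.even_or_odd' i with ⟨c, rfl | rfl⟩
  · have := hs (idx2 n ⟨c, by omega⟩)
    rw [omega_single_idx2] at this
    simpa [idx1] using this
  · have := hs (idx1 n ⟨c, by omega⟩)
    rw [omega_single_idx1] at this
    simpa [idx2] using this

/-- For every nonzero `u ∈ ℝ^{2n}` there is `γ ∈ Sp(2n, ℤ)` such that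
every coordinate of `γu` is nonzero. -/
theorem exists_integer_symplectic_all_coords_nonzero (n : ℕ) (hn : 1 ≤ n)
    (u : Fin (2 * n) → ℝ) (hu : u ≠ 0) :
    ∃ γ : Matrix (Fin (2 * n)) (Fin (2 * n)) ℤ,
      IsSymplectic n (γ.map (Int.cast : ℤ → ℝ)) ∧
      ∀ k : Fin (2 * n), (γ.map (Int.cast : ℤ → ℝ)).mulVec u k ≠ 0 := by
  obtain ⟨v, hv, hw⟩ := exists_vec n u hu
  set a := omegaForm n (fun i => (v i : ℝ)) u with ha
  have hfin : (⋃ k, {m : ℤ | u k + (m * a) * v k = 0}).Finite := by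
    refine Set.finite_iUnion fun k => Set.Subsingleton.finite ?_
    intro m hm m' hm'
    simp only [Set.mem_setOf_eq] at hm hm'
    have hvk : (v k : ℝ) ≠ 0 := by exact_mod_cast hv k
    have h : (m : ℝ) * (a * v k) = m' * (a * v k) := by linarith
    exact_mod_cast mul_right_cancel₀ (mul_ne_zero hw hvk) h
  obtain ⟨m, hm⟩ := hfin.exists_notMem
  refine ⟨transv n m v, transv_symplectic n m v, fun k hk => hm ?_⟩
  rw [transv_mulVec] at hk
  exact Set.mem_iUnion.2 ⟨k, by simpa using hk⟩
end

section
/- Let n ≥ 2 and let CH ⊂ GL(2n, ℝ) be the closed subgroup consisting of all block matrices g(t, x, y, z) = [[t, x, z], [0, I_{2n−2}, y], [0, 0, t⁻¹]], where t > 0 is a real number, x is a real row vector of length 2n−2, y is a real column vector of length 2n−2, z ∈ ℝ, and I_{2n−2} is the identity block. Then CH contains no lattice: for every discrete subgroup Δ of CH and every measurable fundamental domain D ⊆ CH for the action of Δ on CH by left translations, D has infinite measure with respect to a (left) Haar measure on CH. -/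
open MeasureTheory

/-- The Borel (product) measurable structure on real matrices. -/
instance matrixMeasurableSpace (m k : ℕ) : MeasurableSpace (Matrix (Fin m) (Fin k) ℝ) :=
  (inferInstance : MeasurableSpace (Fin m → Fin k → ℝ))

/-- The block matrix `g(t, x, y, z) = [[t, x, z], [0, I_{2n−2}, y], [0, 0, t⁻¹]]`
(`t` in position `(0,0)`, `t⁻¹` in position `(2n−1, 2n−1)`, `x` the rest of the first
row, `y` the rest of the last column, `z` the corner entry `(0, 2n−1)`, and the
identity block `I_{2n−2}` in the middle). -/
noncomputable def chMat (n : ℕ) (t : ℝ) (x y : Fin (2 * n - 2) → ℝ) (z : ℝ) :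
    Matrix (Fin (2 * n)) (Fin (2 * n)) ℝ := fun i j =>
  if hi0 : i.val = 0 then
    if hj0 : j.val = 0 then t
    else if hjl : j.val = 2 * n - 1 then z
    else x ⟨j.val - 1, by have := j.isLt; omega⟩
  else if hil : i.val = 2 * n - 1 then
    if j.val = 2 * n - 1 then t⁻¹ else 0
  else
    if hjl : j.val = 2 * n - 1 then y ⟨i.val - 1, by have := i.isLt; omega⟩
    else if i = j then (1 : ℝ) else 0

/-- The group `CH = H_{2n−1} ⋊ ℝ₊`, realized as the set of all block matrices
`g(t, x, y, z)` with `t > 0`. -/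
def chSet (n : ℕ) : Set (Matrix (Fin (2 * n)) (Fin (2 * n)) ℝ) :=
  {g | ∃ t : ℝ, 0 < t ∧ ∃ x y : Fin (2 * n - 2) → ℝ, ∃ z : ℝ, g = chMat n t x y z}

namespace CHaux

lemma sum_split (N : ℕ) (h : 2 ≤ N) (f : Fin N → ℝ) :
    ∑ j, f j = f ⟨0, by omega⟩ + (∑ i : Fin (N - 2), f ⟨i.val + 1, by omega⟩)
      + f ⟨N - 1, by omega⟩ := by
  obtain ⟨M, rfl⟩ : ∃ M, N = M + 2 := ⟨N - 2, by omega⟩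
  rw [Fin.sum_univ_castSucc, Fin.sum_univ_succ]
  rfl

lemma chMat_mul (n : ℕ) (hn : 2 ≤ n) (t t' : ℝ) (x y x' y' : Fin (2 * n - 2) → ℝ) (z z' : ℝ) :
    chMat n t x y z * chMat n t' x' y' z' =
      chMat n (t * t') (fun i => t * x' i + x i) (fun i => y' i + y i * t'⁻¹)
        (t * z' + (∑ i, x i * y' i) + z * t'⁻¹) := by
  ext i j
  rw [Matrix.mul_apply, sum_split (2 * n) (by omega)]
  have e1 : ∀ i : Fin (2 * n - 2), ¬ (i.val + 1 = 2 * n - 1) := fun i => by omega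
  have e2 : ¬ (2 * n - 1 = 0) := by omega
  have e3 : ¬ (0 = 2 * n - 1) := by omega
  have hil := i.isLt
  have hjl := j.isLt
  by_cases hi0 : i.val = 0
  · by_cases hj0 : j.val = 0
    · simp [chMat, hi0, hj0, e1, e2, e3, Fin.ext_iff]
    · by_cases hj1 : j.val = 2 * n - 1
      · simp [chMat, hi0, hj1, e1, e2, e3]
      · have : ∀ k : Fin (2 * n - 2), ((k.val + 1 = j.val) ↔ k = ⟨j.val - 1, by omega⟩) := by
          intro k; rw [Fin.ext_iff]; simp only; omega
        simp [chMat, hi0, hj0, hj1, e1, e2, e3, Fin.ext_iff]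
        simp [this]
  · by_cases hi1 : i.val = 2 * n - 1
    · by_cases hj1 : j.val = 2 * n - 1
      · simp [chMat, hi1, hj1, e1, e2, e3]
        ring
      · simp [chMat, hi1, hj1, e1, e2, e3]
    · have : ∀ k : Fin (2 * n - 2), ((i.val = k.val + 1) ↔ k = ⟨i.val - 1, by omega⟩) := by
        intro k; rw [Fin.ext_iff]; simp only; omega
      by_cases hj1 : j.val = 2 * n - 1
      · simp [chMat, hi0, hi1, hj1, e1, e2, e3, Fin.ext_iff]
        simp [this]
      · simp [chMat, hi0, hi1, hj1, e1, e2, e3, Fin.ext_iff]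
        rw [Finset.sum_eq_single (⟨i.val - 1, by omega⟩ : Fin (2 * n - 2))]
        · have h2 : i.val - 1 + 1 = i.val := by omega
          simp [h2]
        · intro b _ hb
          rw [if_neg (fun h => hb ((this b).1 h))]
          simp
        · simp

/-- Coordinates on CH. -/
structure G (n : ℕ) where
  u : ℝ
  x : Fin (2 * n - 2) → ℝ
  y : Fin (2 * n - 2) → ℝ
  z : ℝ

variable {n : ℕ}

@[ext] lemma G.ext' {a b : G n} (h1 : a.u = b.u) (h2 : ∀ i, a.x i = b.x i)
    (h3 : ∀ i, a.y i = b.y i) (h4 : a.z = b.z) : a = b := by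
  cases a; cases b; simp only [G.mk.injEq]; exact ⟨h1, funext h2, funext h3, h4⟩

noncomputable instance : Mul (G n) := ⟨fun a b =>
  ⟨a.u + b.u, fun i => Real.exp a.u * b.x i + a.x i, fun i => b.y i + a.y i * Real.exp (-b.u),
    Real.exp a.u * b.z + (∑ i, a.x i * b.y i) + a.z * Real.exp (-b.u)⟩⟩

instance : One (G n) := ⟨⟨0, 0, 0, 0⟩⟩

noncomputable instance : Inv (G n) := ⟨fun a =>
  ⟨-a.u, fun i => - Real.exp (-a.u) * a.x i, fun i => - a.y i * Real.exp a.u,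
    (∑ i, a.x i * a.y i) - a.z⟩⟩

@[simp] lemma mul_u (a b : G n) : (a * b).u = a.u + b.u := rfl
@[simp] lemma mul_x (a b : G n) (i) : (a * b).x i = Real.exp a.u * b.x i + a.x i := rfl
@[simp] lemma mul_y (a b : G n) (i) : (a * b).y i = b.y i + a.y i * Real.exp (-b.u) := rfl
@[simp] lemma mul_z (a b : G n) : (a * b).z =
  Real.exp a.u * b.z + (∑ i, a.x i * b.y i) + a.z * Real.exp (-b.u) := rfl
@[simp] lemma one_u : (1 : G n).u = 0 := rfl
@[simp] lemma one_x (i) : (1 : G n).x i = 0 := rfl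
@[simp] lemma one_y (i) : (1 : G n).y i = 0 := rfl
@[simp] lemma one_z : (1 : G n).z = 0 := rfl
@[simp] lemma inv_u (a : G n) : (a⁻¹).u = - a.u := rfl
@[simp] lemma inv_x (a : G n) (i) : (a⁻¹).x i = - Real.exp (-a.u) * a.x i := rfl
@[simp] lemma inv_y (a : G n) (i) : (a⁻¹).y i = - a.y i * Real.exp a.u := rfl
@[simp] lemma inv_z (a : G n) : (a⁻¹).z = (∑ i, a.x i * a.y i) - a.z := rfl

noncomputable instance : Group (G n) :=
  Group.ofLeftAxioms
    (by
      intro a b c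
      ext i
      · simp [add_assoc]
      · simp [Real.exp_add]; ring
      · simp [Real.exp_add]; ring
      · simp only [mul_u, mul_x, mul_y, mul_z, Real.exp_add, neg_add, mul_add, add_mul,
          Finset.sum_add_distrib, Finset.mul_sum, Finset.sum_mul]
        simp only [mul_assoc, mul_comm, mul_left_comm]
        ring)
    (by
      intro a; ext i <;> simp)
    (by
      intro a
      ext i
      · simp
      · simp
      · simp [mul_assoc, ← Real.exp_add]
      · simp only [mul_z, inv_u, inv_x, inv_z, one_z, mul_assoc, ← Finset.mul_sum]
        simp [← Finset.mul_sum, mul_assoc]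
        ring)

/-- The coordinate chart. -/
def toP (n : ℕ) : G n ≃ ℝ × (Fin (2 * n - 2) → ℝ) × (Fin (2 * n - 2) → ℝ) × ℝ where
  toFun a := (a.u, a.x, a.y, a.z)
  invFun p := ⟨p.1, p.2.1, p.2.2.1, p.2.2.2⟩
  left_inv _ := rfl
  right_inv _ := rfl

instance : TopologicalSpace (G n) := TopologicalSpace.induced (toP n) inferInstance

/-- The chart as a homeomorphism. -/
def hP (n : ℕ) : G n ≃ₜ ℝ × (Fin (2 * n - 2) → ℝ) × (Fin (2 * n - 2) → ℝ) × ℝ :=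
  (toP n).toHomeomorphOfIsInducing ⟨rfl⟩

instance : MeasurableSpace (G n) := borel _
instance : BorelSpace (G n) := ⟨rfl⟩
instance : SecondCountableTopology (G n) := (hP n).secondCountableTopology
instance : T2Space (G n) := (hP n).symm.t2Space
instance : LocallyCompactSpace (G n) := (hP n).isOpenEmbedding.locallyCompactSpace
instance : PolishSpace (G n) := (hP n).isClosedEmbedding.polishSpace

@[fun_prop] lemma cont_u : Continuous (fun a : G n => a.u) :=
  continuous_fst.comp (hP n).continuous
@[fun_prop] lemma cont_x : Continuous (fun a : G n => a.x) :=
  (continuous_fst.comp continuous_snd).comp (hP n).continuous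
@[fun_prop] lemma cont_y : Continuous (fun a : G n => a.y) :=
  (continuous_fst.comp (continuous_snd.comp continuous_snd)).comp (hP n).continuous
@[fun_prop] lemma cont_z : Continuous (fun a : G n => a.z) :=
  (continuous_snd.comp (continuous_snd.comp continuous_snd)).comp (hP n).continuous

lemma cont_iff {X : Type*} [TopologicalSpace X] {f : X → G n} (h1 : Continuous fun a => (f a).u)
    (h2 : ∀ i, Continuous fun a => (f a).x i) (h3 : ∀ i, Continuous fun a => (f a).y i)
    (h4 : Continuous fun a => (f a).z) : Continuous f := by
  rw [(hP n).isInducing.continuous_iff]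
  exact h1.prodMk ((continuous_pi h2).prodMk ((continuous_pi h3).prodMk h4))

lemma cont_xi (i) : Continuous (fun a : G n => a.x i) := (continuous_apply i).comp cont_x
lemma cont_yi (i) : Continuous (fun a : G n => a.y i) := (continuous_apply i).comp cont_y

instance : IsTopologicalGroup (G n) where
  continuous_mul := by
    have hx := cont_xi (n := n)
    have hy := cont_yi (n := n)
    apply cont_iff <;> simp only [mul_u, mul_x, mul_y, mul_z] <;> intros <;> fun_prop
  continuous_inv := by
    have hx := cont_xi (n := n)
    have hy := cont_yi (n := n)
    apply cont_iff <;> simp only [inv_u, inv_x, inv_y, inv_z] <;> intros <;> fun_prop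

/-- The matrix of a group element. -/
noncomputable def φ (a : G n) : Matrix (Fin (2 * n)) (Fin (2 * n)) ℝ :=
  chMat n (Real.exp a.u) a.x a.y a.z

lemma φ_mul (hn : 2 ≤ n) (a b : G n) : φ (a * b) = φ a * φ b := by
  unfold φ
  rw [chMat_mul n hn, mul_u, Real.exp_add, mul_z, Real.exp_neg]
  congr 1
  funext i
  rw [mul_y, Real.exp_neg]

lemma φ_mem (a : G n) : φ a ∈ chSet n := ⟨_, Real.exp_pos _, _, _, _, rfl⟩

lemma range_φ : Set.range (φ (n := n)) = chSet n := by
  apply Set.Subset.antisymm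
  · rintro _ ⟨a, rfl⟩; exact φ_mem a
  · rintro _ ⟨t, ht, x, y, z, rfl⟩
    exact ⟨⟨Real.log t, x, y, z⟩, by simp [φ, Real.exp_log ht]⟩

lemma φ_inj (hn : 2 ≤ n) : Function.Injective (φ (n := n)) := by
  intro a b h
  have key : ∀ i j, φ a i j = φ b i j := fun i j => by rw [h]
  have e2 : ¬ (2 * n - 1 = 0) := by omega
  ext i
  · have := key ⟨0, by omega⟩ ⟨0, by omega⟩
    simpa [φ, chMat] using this
  · have := key ⟨0, by omega⟩ ⟨i.val + 1, by omega⟩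
    have e1 : ¬ (i.val + 1 = 2 * n - 1) := by omega
    simpa [φ, chMat, e1] using this
  · have := key ⟨i.val + 1, by omega⟩ ⟨2 * n - 1, by omega⟩
    have e1 : ¬ (i.val + 1 = 2 * n - 1) := by omega
    simpa [φ, chMat, e1] using this
  · have := key ⟨0, by omega⟩ ⟨2 * n - 1, by omega⟩
    simpa [φ, chMat, e2] using this

lemma φ_cont : Continuous (φ (n := n)) := by
  have hx := cont_xi (n := n)
  have hy := cont_yi (n := n)
  refine continuous_pi fun i => continuous_pi fun j => ?_
  unfold φ chMat
  split_ifs <;> try fun_prop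
  exact (Real.continuous_exp.comp cont_u).inv₀ (fun a => (Real.exp_pos _).ne')

lemma φ_one (hn : 2 ≤ n) : φ (1 : G n) = 1 := by
  ext i j
  have e2 : ¬ (2 * n - 1 = 0) := by omega
  have e3 : ¬ (0 = 2 * n - 1) := by omega
  rw [Matrix.one_apply]
  change chMat n (Real.exp 0) (fun _ => 0) (fun _ => 0) 0 i j = _
  unfold chMat
  simp only [Fin.ext_iff]
  split_ifs <;> first | (exfalso; omega) | simp

instance borelMat (k : ℕ) : BorelSpace (Matrix (Fin k) (Fin k) ℝ) :=
  (inferInstance : BorelSpace (Fin k → Fin k → ℝ))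

lemma φ_me (hn : 2 ≤ n) : MeasurableEmbedding (φ (n := n)) :=
  have : SecondCountableTopology (Matrix (Fin (2 * n)) (Fin (2 * n)) ℝ) :=
    (inferInstance : SecondCountableTopology (Fin (2 * n) → Fin (2 * n) → ℝ))
  φ_cont.measurableEmbedding (φ_inj hn)

section core
open MeasureTheory Measure Set
variable {n : ℕ}

/-- The diagonal element. -/
noncomputable def aa (n : ℕ) : G n := ⟨Real.log 3, 0, 0, 0⟩

/-- A central element. -/
noncomputable def kk (n : ℕ) : G n := ⟨0, 0, 0, -4⟩

/-- An open box. -/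
def BB (n : ℕ) : Set (G n) := hP n ⁻¹' (Ioo 0 (Real.log 2) ×ˢ (univ.pi fun _ => Ioo (-1) 1) ×ˢ
  (univ.pi fun _ => Ioo (-1) 1) ×ˢ Ioo (-1) 1)

lemma mem_BB (g : G n) : g ∈ BB n ↔ (0 < g.u ∧ g.u < Real.log 2) ∧ (∀ i, -1 < g.x i ∧ g.x i < 1) ∧
    (∀ i, -1 < g.y i ∧ g.y i < 1) ∧ (-1 < g.z ∧ g.z < 1) := by
  change (g.u, g.x, g.y, g.z) ∈ (Ioo 0 (Real.log 2) ×ˢ (univ.pi fun _ => Ioo (-1) 1) ×ˢ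
    (univ.pi fun _ => Ioo (-1) 1) ×ˢ Ioo (-1 : ℝ) 1) ↔ _
  simp only [mem_prod, mem_Ioo, mem_univ_pi]

lemma BB_open : IsOpen (BB n) := by
  apply IsOpen.preimage (hP n).continuous
  refine isOpen_Ioo.prod (IsOpen.prod ?_ (IsOpen.prod ?_ isOpen_Ioo)) <;>
  exact isOpen_set_pi finite_univ (fun _ _ => isOpen_Ioo)

lemma BB_nonempty : (BB n).Nonempty := by
  have h := Real.log_pos (show (1 : ℝ) < 2 by norm_num)
  refine ⟨⟨Real.log 2 / 2, 0, 0, 0⟩, ?_⟩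
  rw [mem_BB]
  refine ⟨⟨by simpa using h, by simpa using h⟩, ?_, ?_, ?_⟩ <;> simp

lemma BB_finite (μ : Measure (G n)) [IsFiniteMeasureOnCompacts μ] : μ (BB n) < ⊤ := by
  have hK : IsCompact (hP n ⁻¹' (Icc 0 (Real.log 2) ×ˢ (univ.pi fun _ => Icc (-1) 1) ×ˢ
      (univ.pi fun _ => Icc (-1) 1) ×ˢ Icc (-1) 1)) := by
    rw [(hP n).isCompact_preimage]
    refine isCompact_Icc.prod (IsCompact.prod ?_ (IsCompact.prod ?_ isCompact_Icc)) <;>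
    exact isCompact_univ_pi (fun _ => isCompact_Icc)
  refine lt_of_le_of_lt (measure_mono (preimage_mono ?_)) hK.measure_lt_top
  refine prod_mono Ioo_subset_Icc_self (prod_mono ?_ (prod_mono ?_ Ioo_subset_Icc_self)) <;>
  exact pi_mono (fun _ _ => Ioo_subset_Icc_self)

lemma conj_mem (g : G n) (hu : 0 < g.u ∧ g.u < Real.log 2) (hx : ∀ i, -1 < g.x i ∧ g.x i < 1)
    (hy : ∀ i, -1 < g.y i ∧ g.y i < 1) (hz : -9 < g.z ∧ g.z < 9) :
    (aa n)⁻¹ * g * aa n ∈ BB n := by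
  have e : Real.exp (-Real.log 3) = 1 / 3 := by
    rw [Real.exp_neg, Real.exp_log (by norm_num)]; norm_num
  rw [mem_BB]
  refine ⟨?_, fun i => ?_, fun i => ?_, ?_⟩
  · simpa [aa] using hu
  · have := hx i
    simp [aa, e]; constructor <;> linarith
  · have := hy i
    simp [aa, e]; constructor <;> linarith
  · simp [aa, e]; constructor <;> linarith

lemma two_le (μ : Measure (G n)) [IsHaarMeasure μ] (c : NNReal)
    (hc : map (· * aa n) μ = c • μ) : 2 ≤ c := by
  have hm : Measurable (· * aa n) := (continuous_mul_const _).measurable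
  have hB := (BB_open (n := n)).measurableSet
  have h1 : μ {g | (aa n)⁻¹ * g * aa n ∈ BB n} = c * μ (BB n) := by
    have := measure_preimage_mul μ (aa n)⁻¹ ((· * aa n) ⁻¹' BB n)
    rw [← map_apply hm hB, hc] at this
    rw [Measure.smul_apply, ENNReal.smul_def, smul_eq_mul] at this
    rw [← this]
    rfl
  have h2 : μ ((kk n * ·) ⁻¹' BB n) = μ (BB n) := measure_preimage_mul _ _ _
  have hdisj : Disjoint (BB n) ((kk n * ·) ⁻¹' BB n) := by
    rw [Set.disjoint_left]
    intro g hg hg'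
    rw [mem_preimage, mem_BB] at hg'
    rw [mem_BB] at hg
    have h3 := hg'.2.2.2.1
    simp [kk] at h3
    have h4 : (1 / 2 : ℝ) < Real.exp (-g.u) := by
      have := Real.exp_lt_exp.2 (neg_lt_neg hg.1.2)
      rw [Real.exp_neg (Real.log 2), Real.exp_log (by norm_num)] at this
      linarith
    linarith [hg.2.2.2.2]
  have hsub : BB n ∪ ((kk n * ·) ⁻¹' BB n) ⊆ {g | (aa n)⁻¹ * g * aa n ∈ BB n} := by
    rintro g (hg | hg)
    · rw [mem_BB] at hg
      exact conj_mem g hg.1 hg.2.1 hg.2.2.1 ⟨by linarith [hg.2.2.2.1], by linarith [hg.2.2.2.2]⟩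
    · rw [mem_preimage, mem_BB] at hg
      obtain ⟨hu, hx, hy, hz⟩ := hg
      simp [kk] at hu hx hy hz
      have h5 : Real.exp (-g.u) < 1 := by rw [Real.exp_lt_one_iff]; linarith
      have h6 := Real.exp_pos (-g.u)
      exact conj_mem g hu hx hy ⟨by linarith, by linarith⟩
  have h7 := measure_mono (μ := μ) hsub
  rw [measure_union hdisj ((continuous_const_mul (kk n)).measurable hB), h1, h2, ← two_mul] at h7
  have hpos := BB_open.measure_pos μ (BB_nonempty (n := n))
  have := (ENNReal.mul_le_mul_iff_left hpos.ne' (BB_finite μ).ne).1 h7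
  exact_mod_cast this

lemma core (μ : Measure (G n)) [IsHaarMeasure μ] (Γ : Subgroup (G n)) [Countable Γ]
    (D : Set (G n)) (hD : MeasurableSet D) (hF : IsFundamentalDomain Γ D μ) : μ D = ⊤ := by
  have hm : Measurable (· * aa n) := (continuous_mul_const _).measurable
  have hc := isMulLeftInvariant_eq_smul (map (· * aa n) μ) μ
  set c := haarScalarFactor (map (· * aa n) μ) μ
  have h2 := two_le μ c hc
  have hq : QuasiMeasurePreserving (· * aa n) μ μ := by
    refine ⟨hm, ?_⟩
    rw [hc]
    exact smul_absolutelyContinuous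
  have hF2 : IsFundamentalDomain Γ ((· * aa n) ⁻¹' D) μ :=
    hF.preimage_of_equiv hq (e := id) Function.bijective_id
      (fun γ x => by simp [Subgroup.smul_def, mul_assoc])
  have h3 := hF.measure_eq hF2
  rw [← map_apply hm hD, hc] at h3
  have h4 : μ D ≠ 0 := hF.measure_ne_zero (NeZero.ne μ)
  by_contra htop
  have h5 : (2 : ENNReal) * μ D ≤ 1 * μ D := by
    rw [one_mul]
    conv_rhs => rw [h3]
    rw [Measure.smul_apply, ENNReal.smul_def, smul_eq_mul]
    gcongr
    exact_mod_cast h2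
  have := (ENNReal.mul_le_mul_iff_left h4 htop).1 h5
  norm_num at this

end core
end CHaux

/-- The group `CH = H_{2n−1} ⋊ ℝ₊` contains no lattice: if `μ` is a left
Haar measure on `CH` (viewed as a measure on the matrix space supported on `CH`,
left-invariant under `CH`, positive on open sets meeting `CH` and finite on compact
sets), `Δ` is a discrete subgroup of `CH`, and `D ⊆ CH` is a measurable fundamental
domain for the left-translation action of `Δ` (a.e. orbit of `Δ` meets `D` in exactly
one point), then `D` has infinite measure. -/
theorem chGroup_has_no_lattice (n : ℕ) (hn : 2 ≤ n)
    (μ : Measure (Matrix (Fin (2 * n)) (Fin (2 * n)) ℝ))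
    (hsupp : μ (chSet n)ᶜ = 0)
    (hinv : ∀ g ∈ chSet n, μ.map (fun h => g * h) = μ)
    (hopen : ∀ V : Set (Matrix (Fin (2 * n)) (Fin (2 * n)) ℝ),
      IsOpen V → (V ∩ chSet n).Nonempty → 0 < μ V)
    (hcompact : ∀ K : Set (Matrix (Fin (2 * n)) (Fin (2 * n)) ℝ),
      IsCompact K → μ K < ⊤)
    (Δ : Set (Matrix (Fin (2 * n)) (Fin (2 * n)) ℝ))
    (hΔsub : Δ ⊆ chSet n)
    (hΔone : (1 : Matrix (Fin (2 * n)) (Fin (2 * n)) ℝ) ∈ Δ)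
    (hΔmul : ∀ a ∈ Δ, ∀ b ∈ Δ, a * b ∈ Δ)
    (hΔinv : ∀ a ∈ Δ, ∃ b ∈ Δ, a * b = 1)
    (hΔdisc : DiscreteTopology ↥Δ)
    (D : Set (Matrix (Fin (2 * n)) (Fin (2 * n)) ℝ))
    (hDmeas : MeasurableSet D) (hDsub : D ⊆ chSet n)
    (hfund : ∀ᵐ g ∂μ, ∃! d, d ∈ D ∧ ∃ δ ∈ Δ, d = δ * g) :
    μ D = ⊤ := by
  classical
  have hφ := CHaux.φ_me hn
  have hrange := CHaux.range_φ (n := n)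
  set ν := μ.comap (CHaux.φ (n := n)) with hν
  have hmap : ν.map CHaux.φ = μ := by
    rw [hν, hφ.map_comap, hrange]
    exact Measure.restrict_eq_self_of_ae_mem (by rw [ae_iff]; exact hsupp)
  have happ : ∀ s, ν s = μ (CHaux.φ '' s) := fun s => hφ.comap_apply μ s
  have : IsFiniteMeasureOnCompacts ν := ⟨fun K hK => by
    rw [happ]; exact hcompact _ (hK.image CHaux.φ_cont)⟩
  have : ν.IsMulLeftInvariant := ⟨fun g => by
    ext s hs
    rw [Measure.map_apply (continuous_const_mul g).measurable hs, happ, happ]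
    have hinvg := hinv _ (CHaux.φ_mem g)
    have hcm : Measurable (fun h => CHaux.φ g * h) :=
      (continuous_const.matrix_mul continuous_id).measurable
    conv_rhs => rw [← hinvg]
    rw [Measure.map_apply hcm (hφ.measurableSet_image.2 hs)]
    congr 1
    ext m
    constructor
    · rintro ⟨b, hb, rfl⟩
      exact ⟨g * b, hb, CHaux.φ_mul hn _ _⟩
    · rintro ⟨b, hb, hbm⟩
      refine ⟨g⁻¹ * b, by simpa using hb, ?_⟩
      rw [CHaux.φ_mul hn, hbm, ← mul_assoc, ← CHaux.φ_mul hn, inv_mul_cancel, CHaux.φ_one hn,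
        one_mul]⟩
  have hne : ν ≠ 0 := by
    intro h0
    have := hopen Set.univ isOpen_univ ⟨CHaux.φ 1, trivial, CHaux.φ_mem _⟩
    rw [← hmap, h0] at this
    simp at this
  have hsm := Measure.isMulLeftInvariant_eq_smul ν Measure.haar
  have : ν.IsHaarMeasure := by
    have hc0 : Measure.haarScalarFactor ν Measure.haar ≠ 0 := by
      intro h0
      rw [h0, zero_smul] at hsm
      exact hne hsm
    rw [hsm]
    exact Measure.IsHaarMeasure.nnreal_smul _ hc0
  let Γ : Subgroup (CHaux.G n) :=
    { carrier := CHaux.φ ⁻¹' Δ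
      mul_mem' := by
        intro a b ha hb
        rw [Set.mem_preimage, CHaux.φ_mul hn]
        exact hΔmul _ ha _ hb
      one_mem' := by
        rw [Set.mem_preimage, CHaux.φ_one hn]; exact hΔone
      inv_mem' := by
        intro a ha
        obtain ⟨b, hb, hab⟩ := hΔinv _ ha
        have : CHaux.φ a⁻¹ = b := by
          calc CHaux.φ a⁻¹ = CHaux.φ a⁻¹ * (CHaux.φ a * b) := by rw [hab, mul_one]
            _ = b := by
              rw [← mul_assoc, ← CHaux.φ_mul hn, inv_mul_cancel, CHaux.φ_one hn, one_mul]
        rw [Set.mem_preimage, this]; exact hb }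
  have : Countable Γ := by
    have : SecondCountableTopology (Matrix (Fin (2 * n)) (Fin (2 * n)) ℝ) :=
      (inferInstance : SecondCountableTopology (Fin (2 * n) → Fin (2 * n) → ℝ))
    have : Countable Δ := countable_of_Lindelof_of_discrete
    have hinj : Function.Injective (fun γ : Γ => (⟨CHaux.φ γ.1, γ.2⟩ : Δ)) := by
      intro a b hab
      exact Subtype.ext (CHaux.φ_inj hn (congrArg Subtype.val hab))
    exact hinj.countable
  have hae : ∀ᵐ a ∂ν, ∃! d, d ∈ D ∧ ∃ δ ∈ Δ, d = δ * CHaux.φ a := by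
    rw [← hmap] at hfund
    exact (hφ.ae_map_iff).1 hfund
  have hD' : MeasurableSet (CHaux.φ (n := n) ⁻¹' D) := hφ.measurable hDmeas
  have hF : IsFundamentalDomain Γ (CHaux.φ ⁻¹' D) ν := by
    refine ⟨hD'.nullMeasurableSet, ?_, ?_⟩
    · filter_upwards [hae] with a ha
      obtain ⟨d, ⟨hd, δ, hδ, hdδ⟩, -⟩ := ha
      obtain ⟨γ, rfl⟩ : δ ∈ Set.range (CHaux.φ (n := n)) := by rw [hrange]; exact hΔsub hδ
      refine ⟨⟨γ, hδ⟩, ?_⟩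
      rw [Set.mem_preimage, Subgroup.smul_def, smul_eq_mul, CHaux.φ_mul hn, ← hdδ]
      exact hd
    · intro γ₁ γ₂ hne'
      refine measure_mono_null ?_ (ae_iff.1 hae)
      rintro a ⟨h1, h2⟩ hex
      rw [Set.mem_smul_set_iff_inv_smul_mem] at h1 h2
      rw [Set.mem_preimage, Subgroup.smul_def, smul_eq_mul] at h1 h2
      have := hex.unique ⟨h1, _, (γ₁⁻¹).2, CHaux.φ_mul hn _ _⟩ ⟨h2, _, (γ₂⁻¹).2, CHaux.φ_mul hn _ _⟩
      have h3 := mul_right_cancel (CHaux.φ_inj hn this)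
      exact hne' (inv_injective (Subtype.ext h3))
  have := CHaux.core ν Γ _ hD' hF
  rw [happ, Set.image_preimage_eq_inter_range, hrange, Set.inter_eq_left.2 hDsub] at this
  exact this
end

section
/- Let n ≥ 3 and let u, v ∈ ℤ^{2n} be integer vectors with ω(u, v) > 0 such that the additive subgroup of ℝ² generated by the 2n column vectors (u_k, v_k), k = 1, …, 2n, equals ℤ². Then there exists γ ∈ Sp(2n, ℤ) such that the vectors u' = γu, v' = γv satisfy: (i) ω₁(u', v') > 0; and (ii) for each j = 2, …, n one has u'_{2j} = 0, v'_{2j−1} = 0, v'_{2j} = 0 and u'_{2j−1} ≥ 0 (i.e. the j-th 2×2 block M_j = [[u'_{2j−1}, u'_{2j}], [v'_{2j−1}, v'_{2j}]] has the form [[a_j, 0], [0, 0]] with a_j ≥ 0). -/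
/-- Vector with prescribed block coordinates. -/
def mkVec (n : ℕ) (p q : Fin n → ℤ) : Fin (2 * n) → ℤ := fun k =>
  if k.val % 2 = 0 then p ⟨k.val / 2, by have := k.isLt; omega⟩
  else q ⟨k.val / 2, by have := k.isLt; omega⟩

lemma mkVec_idx1 (n : ℕ) (p q : Fin n → ℤ) (j : Fin n) : mkVec n p q (idx1 n j) = p j := by
  simp [mkVec, idx1]

lemma mkVec_idx2 (n : ℕ) (p q : Fin n → ℤ) (j : Fin n) : mkVec n p q (idx2 n j) = q j := by
  have h1 : (2 * j.val + 1) % 2 = 1 := by omega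
  have h2 : (2 * j.val + 1) / 2 = j.val := by omega
  simp [mkVec, idx2, h1, h2]

lemma idx_cases (n : ℕ) (k : Fin (2 * n)) : ∃ j : Fin n, k = idx1 n j ∨ k = idx2 n j := by
  have := k.isLt
  refine ⟨⟨k.val / 2, by omega⟩, ?_⟩
  simp only [idx1, idx2, Fin.ext_iff]
  omega

lemma vec_ext (n : ℕ) (x y : Fin (2 * n) → ℤ) (h1 : ∀ j, x (idx1 n j) = y (idx1 n j))
    (h2 : ∀ j, x (idx2 n j) = y (idx2 n j)) : x = y := by
  funext k
  obtain ⟨j, rfl | rfl⟩ := idx_cases n k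
  · exact h1 j
  · exact h2 j

/-- Block diagonal element of `SL₂ⁿ`. -/
lemma exists_block (n : ℕ) (a b c d : Fin n → ℤ) (h : ∀ j, a j * d j - b j * c j = 1) :
    ∃ γ : Matrix (Fin (2 * n)) (Fin (2 * n)) ℤ, IsSymplectic n γ ∧
      (∀ x j, γ.mulVec x (idx1 n j) = a j * x (idx1 n j) + b j * x (idx2 n j)) ∧
      (∀ x j, γ.mulVec x (idx2 n j) = c j * x (idx1 n j) + d j * x (idx2 n j)) := by
  let L : (Fin (2 * n) → ℤ) →ₗ[ℤ] (Fin (2 * n) → ℤ) :=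
    { toFun := fun x => mkVec n (fun j => a j * x (idx1 n j) + b j * x (idx2 n j))
        (fun j => c j * x (idx1 n j) + d j * x (idx2 n j))
      map_add' := fun x y => by
        apply vec_ext <;> intro j <;> simp only [Pi.add_apply, mkVec_idx1, mkVec_idx2] <;> ring
      map_smul' := fun r x => by
        apply vec_ext <;> intro j <;>
          simp only [Pi.smul_apply, smul_eq_mul, RingHom.id_apply, mkVec_idx1, mkVec_idx2] <;> ring }
  have e : ∀ x, (LinearMap.toMatrix' L).mulVec x = L x := fun x => LinearMap.toMatrix'_mulVec L x
  have h1 : ∀ x j, L x (idx1 n j) = a j * x (idx1 n j) + b j * x (idx2 n j) :=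
    fun x j => by simp only [L, LinearMap.coe_mk, AddHom.coe_mk, mkVec_idx1]
  have h2 : ∀ x j, L x (idx2 n j) = c j * x (idx1 n j) + d j * x (idx2 n j) :=
    fun x j => by simp only [L, LinearMap.coe_mk, AddHom.coe_mk, mkVec_idx2]
  refine ⟨LinearMap.toMatrix' L, ?_, ?_, ?_⟩
  · intro x y
    simp only [e, omegaForm]
    refine Finset.sum_congr rfl fun j _ => ?_
    simp only [omegaJ, h1, h2]
    linear_combination (x (idx1 n j) * y (idx2 n j) - x (idx2 n j) * y (idx1 n j)) * h j
  · intro x j; rw [e, h1]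
  · intro x j; rw [e, h2]

/-- Mixing two blocks by `diag(A, A⁻ᵀ)`, `A ∈ SL₂`. -/
lemma exists_mix (n : ℕ) (i j : Fin n) (hij : i ≠ j) (p q r s : ℤ) (h : p * s - q * r = 1) :
    ∃ γ : Matrix (Fin (2 * n)) (Fin (2 * n)) ℤ, IsSymplectic n γ ∧
      (∀ x k, γ.mulVec x (idx1 n k) = if k = i then p * x (idx1 n i) + q * x (idx1 n j)
        else if k = j then r * x (idx1 n i) + s * x (idx1 n j) else x (idx1 n k)) ∧
      (∀ x k, γ.mulVec x (idx2 n k) = if k = i then s * x (idx2 n i) - r * x (idx2 n j)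
        else if k = j then -q * x (idx2 n i) + p * x (idx2 n j) else x (idx2 n k)) := by
  let L : (Fin (2 * n) → ℤ) →ₗ[ℤ] (Fin (2 * n) → ℤ) :=
    { toFun := fun x => mkVec n
        (fun k => if k = i then p * x (idx1 n i) + q * x (idx1 n j)
          else if k = j then r * x (idx1 n i) + s * x (idx1 n j) else x (idx1 n k))
        (fun k => if k = i then s * x (idx2 n i) - r * x (idx2 n j)
          else if k = j then -q * x (idx2 n i) + p * x (idx2 n j) else x (idx2 n k))
      map_add' := fun x y => by
        apply vec_ext <;> intro k <;> simp only [Pi.add_apply, mkVec_idx1, mkVec_idx2] <;>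
          split_ifs <;> ring
      map_smul' := fun r x => by
        apply vec_ext <;> intro j <;>
          simp only [Pi.smul_apply, smul_eq_mul, RingHom.id_apply, mkVec_idx1, mkVec_idx2] <;>
          split_ifs <;> ring }
  have e : ∀ x, (LinearMap.toMatrix' L).mulVec x = L x := fun x => LinearMap.toMatrix'_mulVec L x
  have h1 : ∀ x k, L x (idx1 n k) = if k = i then p * x (idx1 n i) + q * x (idx1 n j)
        else if k = j then r * x (idx1 n i) + s * x (idx1 n j) else x (idx1 n k) :=
    fun x j => by simp only [L, LinearMap.coe_mk, AddHom.coe_mk, mkVec_idx1]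
  have h2 : ∀ x k, L x (idx2 n k) = if k = i then s * x (idx2 n i) - r * x (idx2 n j)
        else if k = j then -q * x (idx2 n i) + p * x (idx2 n j) else x (idx2 n k) :=
    fun x j => by simp only [L, LinearMap.coe_mk, AddHom.coe_mk, mkVec_idx2]
  refine ⟨LinearMap.toMatrix' L, ?_, ?_, ?_⟩
  · intro x y
    simp only [e, omegaForm]
    rw [← sub_eq_zero, ← Finset.sum_sub_distrib,
      Finset.sum_eq_add i j hij _ (by simp) (by simp)]
    · simp only [omegaJ, h1, h2, hij.symm, if_true, if_false]
      linear_combination (x (idx1 n i) * y (idx2 n i) - x (idx2 n i) * y (idx1 n i)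
        + x (idx1 n j) * y (idx2 n j) - x (idx2 n j) * y (idx1 n j)) * h
    · rintro k - ⟨hk1, hk2⟩
      simp only [omegaJ, h1, h2, hk1, hk2, if_false, sub_self]
  · intro x j; rw [e, h1]
  · intro x j; rw [e, h2]

lemma IsSymplectic.mul' {n : ℕ} {g h : Matrix (Fin (2 * n)) (Fin (2 * n)) ℤ}
    (hg : IsSymplectic n g) (hh : IsSymplectic n h) : IsSymplectic n (g * h) := by
  intro x y
  rw [← Matrix.mulVec_mulVec, ← Matrix.mulVec_mulVec, hg, hh]

lemma exists_sl2 (a b : ℤ) : ∃ p q r s : ℤ, p * s - q * r = 1 ∧ 0 ≤ p * a + q * b ∧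
    r * a + s * b = 0 := by
  by_cases h : Int.gcd a b = 0
  · rw [Int.gcd_eq_zero_iff] at h
    exact ⟨1, 0, 0, 1, by simp [h.1, h.2]⟩
  · obtain ⟨a', ha⟩ : (Int.gcd a b : ℤ) ∣ a := Int.gcd_dvd_left ..
    obtain ⟨b', hb⟩ : (Int.gcd a b : ℤ) ∣ b := Int.gcd_dvd_right ..
    have hbz := Int.gcd_eq_gcd_ab a b
    have hg : (Int.gcd a b : ℤ) ≠ 0 := by exact_mod_cast h
    have hg0 : (0 : ℤ) ≤ Int.gcd a b := by positivity
    generalize (Int.gcd a b : ℤ) = g at *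
    refine ⟨Int.gcdA a b, Int.gcdB a b, -b', a', ?_, ?_, ?_⟩
    · apply mul_left_cancel₀ hg
      linear_combination (-Int.gcdA a b) * ha - Int.gcdB a b * hb - hbz
    · linarith
    · linear_combination (-b') * ha + a' * hb


/-- For `n ≥ 3` and integer vectors `u, v ∈ ℤ^{2n}` with `ω(u, v) > 0`
whose columns `(u_k, v_k)` generate `ℤ²`, there is `γ ∈ Sp(2n, ℤ)` such that for
`u' = γu, v' = γv`: `ω₁(u', v') > 0` and for each `j ≥ 2` the `j`-th block is
`[[a_j, 0], [0, 0]]` with `a_j ≥ 0`. -/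
theorem normalize_blocks_nonneg (n : ℕ) (hn : 3 ≤ n)
    (u v : Fin (2 * n) → ℤ) (hpos : 0 < omegaForm n u v)
    (hgen : AddSubgroup.closure
      (Set.range fun k : Fin (2 * n) => ((u k, v k) : ℤ × ℤ)) = ⊤) :
    ∃ γ : Matrix (Fin (2 * n)) (Fin (2 * n)) ℤ,
      IsSymplectic n γ ∧
      0 < omegaJ n (⟨0, by omega⟩ : Fin n) (γ.mulVec u) (γ.mulVec v) ∧
      ∀ j : Fin n, 1 ≤ j.val →
        γ.mulVec u (idx2 n j) = 0 ∧
        γ.mulVec v (idx1 n j) = 0 ∧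
        γ.mulVec v (idx2 n j) = 0 ∧
        0 ≤ γ.mulVec u (idx1 n j) := by
  classical
  set z : Fin n := ⟨0, by omega⟩ with hz
  -- step 1: kill second coordinates of v
  obtain ⟨γ₁, hγ₁, hv₁⟩ : ∃ γ : Matrix (Fin (2 * n)) (Fin (2 * n)) ℤ, IsSymplectic n γ ∧
      ∀ j, γ.mulVec v (idx2 n j) = 0 := by
    choose p q r s h1 h2 h3 using fun j => exists_sl2 (v (idx1 n j)) (v (idx2 n j))
    obtain ⟨γ, hγ, e1, e2⟩ := exists_block n p q r s h1
    exact ⟨γ, hγ, fun j => by rw [e2, h3]⟩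
  -- step 2: kill first coordinates off block 0
  have key : ∀ S : Finset (Fin n), z ∉ S →
      ∃ γ : Matrix (Fin (2 * n)) (Fin (2 * n)) ℤ, IsSymplectic n γ ∧
      (∀ j, γ.mulVec v (idx2 n j) = 0) ∧ ∀ j ∈ S, γ.mulVec v (idx1 n j) = 0 := by
    intro S
    induction S using Finset.induction_on with
    | empty => exact fun _ => ⟨γ₁, hγ₁, hv₁, by simp⟩
    | insert k S hk ih =>
      intro hS
      rw [Finset.mem_insert, not_or] at hS
      obtain ⟨γ, hγ, a1, a2⟩ := ih hS.2
      obtain ⟨p, q, r, s, h1, h2, h3⟩ :=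
        exists_sl2 (γ.mulVec v (idx1 n z)) (γ.mulVec v (idx1 n k))
      obtain ⟨δ, hδ, e1, e2⟩ := exists_mix n z k hS.1 p q r s h1
      refine ⟨δ * γ, hδ.mul' hγ, ?_, ?_⟩
      · intro j
        rw [← Matrix.mulVec_mulVec, e2]
        simp [a1]
      · intro j hj
        rw [← Matrix.mulVec_mulVec, e1]
        have hjz : j ≠ z := by
          rintro rfl
          rcases Finset.mem_insert.1 hj with h | h
          · exact hS.1 h
          · exact hS.2 h
        rw [if_neg hjz]
        split_ifs with hjk
        · exact h3
        · exact a2 j ((Finset.mem_insert.1 hj).resolve_left hjk)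
  obtain ⟨γ₂, hγ₂, b1, b2⟩ := key (Finset.univ.erase z) (by simp)
  -- step 3: normalise u in every block
  obtain ⟨p, q, r, s, h1, h2, h3⟩ : ∃ p q r s : Fin n → ℤ, (∀ j, p j * s j - q j * r j = 1) ∧
      (∀ j, 0 ≤ p j * γ₂.mulVec u (idx1 n j) + q j * γ₂.mulVec u (idx2 n j)) ∧
      (∀ j, r j * γ₂.mulVec u (idx1 n j) + s j * γ₂.mulVec u (idx2 n j) = 0) := by
    choose p q r s h1 h2 h3 using
      fun j => exists_sl2 (γ₂.mulVec u (idx1 n j)) (γ₂.mulVec u (idx2 n j))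
    exact ⟨p, q, r, s, h1, h2, h3⟩
  obtain ⟨δ, hδ, e1, e2⟩ := exists_block n p q r s h1
  have hsym := hδ.mul' hγ₂
  have hv0 : ∀ j, j ≠ z → (δ * γ₂).mulVec v (idx1 n j) = 0 ∧
      (δ * γ₂).mulVec v (idx2 n j) = 0 := by
    intro j hj
    have := b2 j (by simp [hj])
    rw [← Matrix.mulVec_mulVec, e1, e2, this, b1]
    simp
  refine ⟨δ * γ₂, hsym, ?_, ?_⟩
  · have h := hsym u v
    rw [← h, omegaForm, Finset.sum_eq_single z] at hpos
    · exact hpos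
    · intro j _ hj
      simp [omegaJ, hv0 j hj]
    · simp
  · intro j hj
    have hjz : j ≠ z := by
      rintro rfl
      simp [hz] at hj
    refine ⟨?_, (hv0 j hjz).1, (hv0 j hjz).2, ?_⟩
    · rw [← Matrix.mulVec_mulVec, e2, h3]
    · rw [← Matrix.mulVec_mulVec, e1]; exact h2 j
end

section
/- Let n ≥ 3 and let u, v ∈ ℤ^{2n} be integer vectors with ω(u, v) > 0 such that the additive subgroup of ℝ² generated by the 2n column vectors (u_k, v_k), k = 1, …, 2n, equals ℤ². Set a₁ = ω(u, v). Then there exists γ ∈ Sp(2n, ℤ) such that the vectors u' = γu, v' = γv satisfy: u'₁ = a₁, u'₂ = 0, v'₁ = 0, v'₂ = 1 (i.e. the first 2×2 block M₁ equals [[a₁, 0], [0, 1]]), and for each j = 2, …, n one has u'_{2j} = 0, v'_{2j−1} = 0, v'_{2j} = 0 and 0 ≤ u'_{2j−1} < a₁ (i.e. M_j = [[a_j, 0], [0, 0]] with 0 ≤ a_j < a₁). -/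
namespace NBR

abbrev V (n : ℕ) := Fin (2 * n) → ℤ

def mk (n : ℕ) (p q : Fin n → ℤ) : V n := fun k =>
  if k.val % 2 = 0 then p ⟨k.val / 2, by have := k.isLt; omega⟩
  else q ⟨k.val / 2, by have := k.isLt; omega⟩

@[simp] lemma mk_idx1 (n : ℕ) (p q : Fin n → ℤ) (j : Fin n) : mk n p q (idx1 n j) = p j := by
  simp [mk, idx1]

@[simp] lemma mk_idx2 (n : ℕ) (p q : Fin n → ℤ) (j : Fin n) : mk n p q (idx2 n j) = q j := by
  have h : (2 * j.val + 1) / 2 = j.val := by omega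
  have h' : (2 * j.val + 1) % 2 = 1 := by omega
  simp [mk, idx2, h, h']

lemma idx_cases (n : ℕ) (k : Fin (2 * n)) : ∃ j : Fin n, k = idx1 n j ∨ k = idx2 n j := by
  have hk := k.isLt
  refine ⟨⟨k.val / 2, by omega⟩, ?_⟩
  rcases Nat.mod_two_eq_zero_or_one k.val with h | h
  · left; ext; simp [idx1]; omega
  · right; ext; simp [idx2]; omega

lemma ext_idx {n : ℕ} {x y : V n} (h1 : ∀ j, x (idx1 n j) = y (idx1 n j))
    (h2 : ∀ j, x (idx2 n j) = y (idx2 n j)) : x = y := by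
  funext k
  obtain ⟨j, rfl | rfl⟩ := idx_cases n k
  · exact h1 j
  · exact h2 j

lemma om_add_left (n : ℕ) (x y z : V n) :
    omegaForm n (x + y) z = omegaForm n x z + omegaForm n y z := by
  simp only [omegaForm, omegaJ, ← Finset.sum_add_distrib, Pi.add_apply]
  exact Finset.sum_congr rfl fun j _ => by ring

lemma om_smul_left (n : ℕ) (c : ℤ) (x z : V n) :
    omegaForm n (c • x) z = c * omegaForm n x z := by
  simp only [omegaForm, omegaJ, Finset.mul_sum, Pi.smul_apply, smul_eq_mul]
  exact Finset.sum_congr rfl fun j _ => by ring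

lemma om_swap (n : ℕ) (x y : V n) : omegaForm n x y = - omegaForm n y x := by
  simp only [omegaForm, omegaJ, ← Finset.sum_neg_distrib]
  exact Finset.sum_congr rfl fun j _ => by ring

lemma om_self (n : ℕ) (x : V n) : omegaForm n x x = 0 := by
  have := om_swap n x x; omega

lemma om_add_right (n : ℕ) (x y z : V n) :
    omegaForm n z (x + y) = omegaForm n z x + omegaForm n z y := by
  rw [om_swap, om_add_left, om_swap n z x, om_swap n z y]; ring

lemma om_smul_right (n : ℕ) (c : ℤ) (x z : V n) :
    omegaForm n z (c • x) = c * omegaForm n z x := by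
  rw [om_swap, om_smul_left, om_swap n z x]; ring

/-- symplectic linear maps -/
def Good (n : ℕ) (g : V n →ₗ[ℤ] V n) : Prop :=
  ∀ x y, omegaForm n (g x) (g y) = omegaForm n x y

lemma Good.comp {n : ℕ} {g h : V n →ₗ[ℤ] V n} (hg : Good n g) (hh : Good n h) :
    Good n (g ∘ₗ h) := fun x y => by
  simp only [LinearMap.comp_apply]; rw [hg, hh]

/-- Eichler transvections -/
lemma exists_E (n : ℕ) (f w : V n) (c : ℤ) (hfw : omegaForm n f w = 0) :
    ∃ g : V n →ₗ[ℤ] V n, Good n g ∧ ∀ x, g x =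
      x + omegaForm n x f • w + (omegaForm n x w + c * omegaForm n x f) • f := by
  refine ⟨{ toFun := fun x =>
      x + omegaForm n x f • w + (omegaForm n x w + c * omegaForm n x f) • f
            map_add' := ?_
            map_smul' := ?_ }, ?_, fun x => rfl⟩
  · intro x y
    simp only [om_add_left]
    module
  · intro a x
    simp only [om_smul_left, RingHom.id_apply]
    module
  · intro x y
    have hwf : omegaForm n w f = 0 := by rw [om_swap, hfw]; rfl
    simp only [LinearMap.coe_mk, AddHom.coe_mk, om_add_left, om_add_right, om_smul_left,
      om_smul_right, om_self, hfw, hwf]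
    rw [om_swap n w y, om_swap n f y]
    ring

/-- blockwise SL2 -/
lemma exists_S (n : ℕ) (a b c d : Fin n → ℤ) (h : ∀ j, a j * d j - b j * c j = 1) :
    ∃ g : V n →ₗ[ℤ] V n, Good n g ∧ ∀ x j,
      g x (idx1 n j) = a j * x (idx1 n j) + b j * x (idx2 n j) ∧
      g x (idx2 n j) = c j * x (idx1 n j) + d j * x (idx2 n j) := by
  refine ⟨{ toFun := fun x => mk n (fun j => a j * x (idx1 n j) + b j * x (idx2 n j))
              (fun j => c j * x (idx1 n j) + d j * x (idx2 n j))
            map_add' := ?_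
            map_smul' := ?_ }, ?_, fun x j => ?_⟩
  · intro x y
    apply ext_idx <;> intro j <;> simp <;> ring
  · intro r x
    apply ext_idx <;> intro j <;> simp <;> ring
  · intro x y
    simp only [LinearMap.coe_mk, AddHom.coe_mk, omegaForm, omegaJ, mk_idx1, mk_idx2]
    refine Finset.sum_congr rfl fun j _ => ?_
    linear_combination
      (x (idx1 n j) * y (idx2 n j) - x (idx2 n j) * y (idx1 n j)) * h j
  · simp only [LinearMap.coe_mk, AddHom.coe_mk, mk_idx1, mk_idx2, and_self]

lemma sl2 (x y : ℤ) : ∃ a b c d : ℤ, a * d - b * c = 1 ∧ c * x + d * y = 0 := by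
  by_cases h : x = 0 ∧ y = 0
  · exact ⟨1, 0, 0, 1, by norm_num, by simp [h.1, h.2]⟩
  · have hg : (Int.gcd x y : ℤ) ≠ 0 := by
      intro h0
      exact h (Int.gcd_eq_zero_iff.mp (by exact_mod_cast h0))
    obtain ⟨x', hx⟩ := Int.gcd_dvd_left x y
    obtain ⟨y', hy⟩ := Int.gcd_dvd_right x y
    have hb := Int.gcd_eq_gcd_ab x y
    refine ⟨Int.gcdA x y, Int.gcdB x y, -y', x', ?_, ?_⟩
    · apply mul_left_cancel₀ hg
      linear_combination (-1 : ℤ) * hb - Int.gcdA x y * hx - Int.gcdB x y * hy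
    · linear_combination (-y') * hx + x' * hy

/-- basis vectors of the block `i` -/
def eV (n : ℕ) (i : Fin n) : V n := mk n (Pi.single i 1) 0
def fV (n : ℕ) (i : Fin n) : V n := mk n 0 (Pi.single i 1)

lemma om_e (n : ℕ) (i : Fin n) (x : V n) : omegaForm n x (eV n i) = - x (idx2 n i) := by
  simp [omegaForm, omegaJ, eV, Pi.single_apply]

lemma om_f (n : ℕ) (i : Fin n) (x : V n) : omegaForm n x (fV n i) = x (idx1 n i) := by
  simp [omegaForm, omegaJ, fV, Pi.single_apply]

@[simp] lemma e1 (n : ℕ) (i : Fin n) : eV n i (idx1 n i) = 1 := by simp [eV]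
@[simp] lemma e2 (n : ℕ) (i j : Fin n) : eV n i (idx2 n j) = 0 := by simp [eV]
@[simp] lemma f1 (n : ℕ) (i j : Fin n) : fV n i (idx1 n j) = 0 := by simp [fV]
@[simp] lemma f2 (n : ℕ) (i : Fin n) : fV n i (idx2 n i) = 1 := by simp [fV]
lemma f2' (n : ℕ) (i j : Fin n) (h : j ≠ i) : fV n i (idx2 n j) = 0 := by simp [fV, h]

/-- a vector whose `f`-coordinate is one can be moved to `f` -/
lemma step1c (n : ℕ) (i : Fin n) (v : V n) (hv : v (idx2 n i) = 1) :
    ∃ g, Good n g ∧ g v = fV n i := by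
  set w : V n := v + (-1 : ℤ) • fV n i + (-v (idx1 n i)) • eV n i with hw
  have h1 : omegaForm n (eV n i) w = 0 := by
    rw [om_swap, om_e, hw]; simp [hv]
  obtain ⟨g, hg, hgx⟩ := exists_E n (eV n i) w (v (idx1 n i) + omegaForm n v w) h1
  refine ⟨g, hg, ?_⟩
  rw [hgx, om_e, hv]
  have : v = w + fV n i + v (idx1 n i) • eV n i := by rw [hw]; module
  generalize omegaForm n v w = m
  generalize v (idx1 n i) = p at *
  rw [this]
  module

lemma step1 (n : ℕ) (i : Fin n) (v t : V n) (ht : omegaForm n v t = 1) :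
    ∃ g, Good n g ∧ g v = fV n i := by
  classical
  obtain ⟨a, b, c, d, hdet, h0⟩ := sl2 (v (idx1 n i)) (v (idx2 n i))
  obtain ⟨g₁, hg₁, hgx₁⟩ := exists_S n (fun _ => a) (fun _ => b) (fun _ => c) (fun _ => d)
    (fun _ => hdet)
  have hv2 : g₁ v (idx2 n i) = 0 := by rw [(hgx₁ v i).2]; exact h0
  have ht1 : omegaForm n (g₁ v) (g₁ t) = 1 := by rw [hg₁, ht]
  generalize g₁ t = t' at ht1
  generalize hvv : g₁ v = v' at *
  set w : V n := t' + (-t' (idx1 n i)) • eV n i with hw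
  have hfw : omegaForm n (fV n i) w = 0 := by
    rw [om_swap, om_f, hw]; simp
  obtain ⟨g₂, hg₂, hgx₂⟩ := exists_E n (fV n i) w (- t' (idx2 n i)) hfw
  have hvw : omegaForm n v' w = 1 := by
    rw [hw, om_add_right, om_smul_right, om_e, ht1, hv2]; ring
  have h1 : g₂ v' (idx2 n i) = 1 := by
    rw [hgx₂, hvw, om_f]
    simp [hv2, hw]
    ring
  obtain ⟨g₃, hg₃, hgx₃⟩ := step1c n i _ h1
  exact ⟨g₃ ∘ₗ (g₂ ∘ₗ g₁), hg₃.comp (hg₂.comp hg₁), by simp [hvv, hgx₃]⟩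

lemma main (n : ℕ) (i : Fin n) (u v s t : V n) (hpos : 0 < omegaForm n u v)
    (hus : omegaForm n u s = 1) (hvs : omegaForm n v s = 0) (hvt : omegaForm n v t = 1) :
    ∃ g, Good n g ∧ g v = fV n i ∧ g u (idx1 n i) = omegaForm n u v ∧ g u (idx2 n i) = 0 ∧
      ∀ j, j ≠ i → g u (idx2 n j) = 0 ∧ 0 ≤ g u (idx1 n j) ∧
        g u (idx1 n j) < omegaForm n u v := by
  classical
  obtain ⟨g₁, hg₁, hv₁⟩ := step1 n i v t hvt
  rw [← hg₁ u s] at hus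
  rw [← hg₁ v s, hv₁] at hvs
  have ha : omegaForm n (g₁ u) (fV n i) = omegaForm n u v := by rw [← hv₁, hg₁]
  generalize omegaForm n u v = A at *
  generalize hu₁ : g₁ u = u₁ at *
  generalize g₁ s = s₁ at *
  have hs1 : s₁ (idx1 n i) = 0 := by
    rw [om_swap, om_f] at hvs; omega
  -- step 2
  obtain ⟨g₂, hg₂, hgx₂⟩ := exists_E n (fV n i) ((-u₁ (idx2 n i)) • s₁)
    (u₁ (idx2 n i) * s₁ (idx2 n i)) (by rw [om_smul_right, hvs]; ring)
  have hv₂ : g₂ (fV n i) = fV n i := by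
    rw [hgx₂, om_self, om_smul_right, hvs]; module
  have hu₂1 : g₂ u₁ (idx1 n i) = A := by
    rw [hgx₂]; simp [hs1]; rw [← om_f n i u₁, ha]
  have hu₂2 : g₂ u₁ (idx2 n i) = 0 := by
    rw [hgx₂, om_smul_right, hus, ha]; simp; ring
  generalize hu₂ : g₂ u₁ = u₂ at *
  -- step 3
  choose a b c d hdet h0 using fun j => sl2 (u₂ (idx1 n j)) (u₂ (idx2 n j))
  obtain ⟨g₃, hg₃, hgx₃⟩ := exists_S n (fun j => if j = i then 1 else a j)
    (fun j => if j = i then 0 else b j) (fun j => if j = i then 0 else c j)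
    (fun j => if j = i then 1 else d j) (by intro j; by_cases h : j = i <;> simp [h, hdet])
  have hv₃ : g₃ (fV n i) = fV n i := by
    apply ext_idx
    · intro j; rw [(hgx₃ _ j).1]
      by_cases h : j = i
      · simp [h]
      · simp [h, f2' n i j h]
    · intro j; rw [(hgx₃ _ j).2]
      by_cases h : j = i
      · simp [h]
      · simp [h, f2' n i j h]
  have hu₃1 : g₃ u₂ (idx1 n i) = A := by rw [(hgx₃ _ i).1]; simp [hu₂1]
  have hu₃2 : ∀ j, g₃ u₂ (idx2 n j) = 0 := by
    intro j
    rw [(hgx₃ _ j).2]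
    by_cases h : j = i
    · simp [h, hu₂2]
    · simp [h, h0]
  generalize hu₃ : g₃ u₂ = u₃ at *
  -- step 4
  set w : V n := mk n (fun j => if j = i then 0 else - (u₃ (idx1 n j) / A)) 0 with hw
  have hfw : omegaForm n (fV n i) w = 0 := by
    rw [om_swap, om_f, hw]; simp
  have huw : omegaForm n u₃ w = 0 := by
    simp [omegaForm, omegaJ, hu₃2, hw]
  obtain ⟨g₄, hg₄, hgx₄⟩ := exists_E n (fV n i) w 0 hfw
  have hu₄ : g₄ u₃ = u₃ + A • w := by
    rw [hgx₄, om_f, huw, hu₃1]; module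
  refine ⟨g₄ ∘ₗ (g₃ ∘ₗ (g₂ ∘ₗ g₁)), hg₄.comp (hg₃.comp (hg₂.comp hg₁)), ?_, ?_, ?_, ?_⟩
  · simp only [LinearMap.comp_apply, hv₁, hv₂, hv₃]
    rw [hgx₄, om_self, hfw]; module
  · simp [hu₁, hu₂, hu₃, hu₄, hw, hu₃1]
  · simp [hu₁, hu₂, hu₃, hu₄, hw, hu₃2]
  · intro j hj
    simp only [LinearMap.comp_apply, hu₁, hu₂, hu₃, hu₄]
    refine ⟨by simp [hw, hu₃2], ?_⟩
    have : (u₃ + A • w) (idx1 n j) = u₃ (idx1 n j) % A := by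
      simp [hw, hj, Int.emod_def]; ring
    rw [this]
    exact ⟨Int.emod_nonneg _ hpos.ne', Int.emod_lt_of_pos _ hpos⟩

lemma exists_dual (n : ℕ) (u v : V n) (z : ℤ × ℤ)
    (hz : z ∈ AddSubgroup.closure (Set.range fun k : Fin (2 * n) => ((u k, v k) : ℤ × ℤ))) :
    ∃ s : V n, omegaForm n u s = z.1 ∧ omegaForm n v s = z.2 := by
  induction hz using AddSubgroup.closure_induction with
  | mem x hx =>
    obtain ⟨k, rfl⟩ := hx
    obtain ⟨j, rfl | rfl⟩ := idx_cases n k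
    · exact ⟨fV n j, om_f _ _ _, om_f _ _ _⟩
    · refine ⟨(-1 : ℤ) • eV n j, ?_, ?_⟩ <;> rw [om_smul_right, om_e] <;> simp
  | zero => exact ⟨(0 : ℤ) • 0, by rw [om_smul_right]; simp, by rw [om_smul_right]; simp⟩
  | add x y _ _ hx hy =>
    obtain ⟨s, h1, h2⟩ := hx
    obtain ⟨t, h3, h4⟩ := hy
    exact ⟨s + t, by rw [om_add_right, h1, h3]; rfl, by rw [om_add_right, h2, h4]; rfl⟩
  | neg x _ hx =>
    obtain ⟨s, h1, h2⟩ := hx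
    exact ⟨(-1 : ℤ) • s, by rw [om_smul_right, h1]; simp, by rw [om_smul_right, h2]; simp⟩

end NBR

/-- For `n ≥ 3` and integer vectors `u, v ∈ ℤ^{2n}` with
`a₁ = ω(u, v) > 0` whose columns `(u_k, v_k)` generate `ℤ²`, there is
`γ ∈ Sp(2n, ℤ)` such that for `u' = γu, v' = γv`: the first block `M₁` equals
`[[a₁, 0], [0, 1]]` and for each `j ≥ 2` the `j`-th block is `[[a_j, 0], [0, 0]]`
with `0 ≤ a_j < a₁`. -/
theorem normalize_blocks_reduced (n : ℕ) (hn : 3 ≤ n)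
    (u v : Fin (2 * n) → ℤ) (hpos : 0 < omegaForm n u v)
    (hgen : AddSubgroup.closure
      (Set.range fun k : Fin (2 * n) => ((u k, v k) : ℤ × ℤ)) = ⊤) :
    ∃ γ : Matrix (Fin (2 * n)) (Fin (2 * n)) ℤ,
      IsSymplectic n γ ∧
      γ.mulVec u (idx1 n (⟨0, by omega⟩ : Fin n)) = omegaForm n u v ∧
      γ.mulVec u (idx2 n (⟨0, by omega⟩ : Fin n)) = 0 ∧
      γ.mulVec v (idx1 n (⟨0, by omega⟩ : Fin n)) = 0 ∧
      γ.mulVec v (idx2 n (⟨0, by omega⟩ : Fin n)) = 1 ∧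
      ∀ j : Fin n, 1 ≤ j.val →
        γ.mulVec u (idx2 n j) = 0 ∧
        γ.mulVec v (idx1 n j) = 0 ∧
        γ.mulVec v (idx2 n j) = 0 ∧
        0 ≤ γ.mulVec u (idx1 n j) ∧
        γ.mulVec u (idx1 n j) < omegaForm n u v := by
  obtain ⟨s, hs1, hs2⟩ := NBR.exists_dual n u v (1, 0) (by rw [hgen]; trivial)
  obtain ⟨t, ht1, ht2⟩ := NBR.exists_dual n u v (0, 1) (by rw [hgen]; trivial)
  obtain ⟨g, hg, hv, h1, h2, h3⟩ := NBR.main n ⟨0, by omega⟩ u v s t hpos hs1 hs2 ht2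
  refine ⟨LinearMap.toMatrix' g, ?_, ?_⟩
  · intro x y
    rw [LinearMap.toMatrix'_mulVec, LinearMap.toMatrix'_mulVec]
    exact hg x y
  · simp only [LinearMap.toMatrix'_mulVec]
    rw [hv]
    refine ⟨h1, h2, NBR.f1 _ _ _, NBR.f2 _ _, fun j hj => ?_⟩
    have hne : j ≠ ⟨0, by omega⟩ := by
      intro hj0
      rw [hj0] at hj
      simp at hj
    obtain ⟨h4, h5, h6⟩ := h3 j hne
    exact ⟨h4, NBR.f1 _ _ _, NBR.f2' _ _ _ hne, h5, h6⟩
end
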